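/- Fix α > 1, a prime b, m ∈ ℕ, N = b^m, product weights γ_j > 0, nondecreasing reduction indices 0 = w₁ ≤ w₂ ≤ ⋯ with w_j ∈ ℕ₀, reduced search spaces Z_{N,w_j} (equal to {1} when w_j ≥ m), and exclusion sets E_j ⊊ Z_{N,w_j}. Let z̃ = (z̃₁,…,z̃_s) be constructed by the reduced projection-corrected CBC algorithm (z̃₁ = 1; for d+1 ≤ t₂−1, z̃_{d+1} = b^{w_{d+1}} z_{d+1} with z_{d+1} ∈ Z_{N,w_{d+1}} \ E_{d+1} minimizing the squared worst-case error; z̃_j = 0 for j ≥ t₂). Then for all 1 ≤ d ≤ s and all λ ∈ (1/α, 1]: e²(z̃₁,…,z̃_d) ≤ ( Σ_{u ⊆ [d]} γ_u^λ (4ζ(αλ))^{|u|} / φ(b^{max{0, m − max_{j∈u} w_j}}) · ∏_{j∈u} |Z_{N,w_j}| / (|Z_{N,w_j}| − |E_j|) )^{1/λ}, where γ_u = ∏_{j∈u} γ_j, φ is Euler's totient, and max ∅ = 0. -/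

import Mathlib

/-- The Riemann zeta function for real argument, `ζ(x) = Σ_{n ≥ 1} n^{-x}`. -/
noncomputable def zeta (x : ℝ) : ℝ := ∑' n : ℕ, ((n : ℝ) + 1) ^ (-x)

/-- The weight `r_α(γ,h) = ∏_{j : h_j ≠ 0} γ_j |h_j|^{-α}` for `h ∈ ℤ^d`. -/
noncomputable def rprod (γ : ℕ → ℝ) (α : ℝ) {d : ℕ} (h : Fin d → ℤ) : ℝ :=
  ∏ j, if h j = 0 then 1 else γ (j.1 + 1) * (|h j| : ℝ) ^ (-α)

/-- Squared worst-case error `e²(z) = Σ_{h ∈ ℤ^d \ {0}, h·z ≡ 0 (mod N)} r_α(γ,h)`. -/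
noncomputable def e2 (N : ℕ) (γ : ℕ → ℝ) (α : ℝ) {d : ℕ} (z : Fin d → ℤ) : ℝ :=
  ∑' h : Fin d → ℤ, if h ≠ 0 ∧ (N : ℤ) ∣ ∑ j, h j * z j then rprod γ α h else 0

/-- The reduced search space `Z_{N,w}` for `N = b^m`:
`{z ∈ {1,…,b^{m-w}-1} : gcd(z,b^m) = 1}` if `w < m`, and `{1}` otherwise. -/
def Zred (b m w : ℕ) : Finset ℕ :=
  if w < m then (Finset.Ico 1 (b ^ (m - w))).filter fun z => Nat.gcd z (b ^ m) = 1
  else {1}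

/-!
Appending a component `y` to a generating vector adds to the squared worst-case error the weight of
the dual frequencies whose last entry is nonzero. By Jensen's inequality the `λ`-th power of this
increment is at most the increment for the weights `γ_j^λ` and the smoothness `αλ`. The latter is
averaged over the candidates `b^w y` with `y` in `S ⊆ Z_{N,w}`: given the leading entries `h` of a
frequency, write `h · z = b^w c` (otherwise no candidate gives a dual frequency) and `M = b^{m-w}`;
then `k` is a possible last entry for at most `g = gcd(c, M)` of the `y`, and for none unless
`g ∣ k`. As `g ∑_{g ∣ k} |k|^{-x} ≤ ∑_k |k|^{-x}`, the average is at most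
`∏_j (1 + 2 γ_j^λ ζ(αλ)) · 2 γ^λ ζ(αλ) / |S|`, and a greedy choice does no worse than the average.
Expanding the product over coordinate sets and summing over the components yields the bound, because
`|Z_{N,w}| = φ(b^{m-w})` and `φ(b^{m - max w_j})` divides it.
-/

open scoped ENNReal

section DualLattice

variable {N d : ℕ} {γ : ℕ → ℝ} {α : ℝ}

/-- The dual lattice of the rank-one lattice rule with `N` points and generating vector `z`. -/
def dualLattice (N : ℕ) {d : ℕ} (z : Fin d → ℤ) : Set (Fin d → ℤ) :=
  {h | (N : ℤ) ∣ ∑ j, h j * z j}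

/-- The dual frequencies in dimension `d + 1` that do not come from dimension `d`, when the
component `y` is appended to the generating vector `z`. -/
def newDual (N : ℕ) {d : ℕ} (z : Fin d → ℤ) (y : ℤ) : Set (Fin (d + 1) → ℤ) :=
  {h ∈ dualLattice N (Fin.snoc z y : Fin (d + 1) → ℤ) | h (Fin.last d) ≠ 0}

/-- The total weight `∑_{h ∈ A} r_α(γ,h)` of a set of frequencies, valued in `ℝ≥0∞` so that sums
may be rearranged before they are known to converge. -/
noncomputable def totalWeight (γ : ℕ → ℝ) (α : ℝ) {d : ℕ} (A : Set (Fin d → ℤ)) : ℝ≥0∞ :=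
  ∑' h : A, ENNReal.ofReal (rprod γ α h.1)

/-- The amount by which the squared worst-case error of the generating vector `z` grows when the
component `y` is appended. -/
noncomputable def errorIncrement (N : ℕ) (γ : ℕ → ℝ) (α : ℝ) {d : ℕ} (z : Fin d → ℤ) (y : ℤ) : ℝ :=
  (totalWeight γ α (newDual N z y)).toReal

lemma snoc_mem_dualLattice {z h : Fin d → ℤ} {y k : ℤ} :
    (Fin.snoc h k : Fin (d + 1) → ℤ) ∈ dualLattice N (Fin.snoc z y : Fin (d + 1) → ℤ) ↔
      (N : ℤ) ∣ ∑ j, h j * z j + k * y := by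
  simp [dualLattice, Fin.sum_univ_castSucc]

lemma dualLattice_congr {z z' : Fin d → ℤ} (hz : ∀ j, z j ≡ z' j [ZMOD N]) :
    dualLattice N z = dualLattice N z' := by
  ext h
  have hsum : ∑ j, h j * z j ≡ ∑ j, h j * z' j [ZMOD N] :=
    Int.ModEq.sum fun j _ => (hz j).mul_left (h j)
  exact hsum.dvd_iff

lemma dualLattice_mul_left {a : ℤ} (ha : IsCoprime (N : ℤ) a) (z : Fin d → ℤ) :
    dualLattice N (fun j => a * z j) = dualLattice N z := by
  ext h
  simp only [dualLattice, Set.mem_ofPred_eq, mul_left_comm _ a, ← Finset.mul_sum]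
  exact ⟨ha.dvd_of_dvd_mul_left, fun hdvd => hdvd.mul_left a⟩

lemma e2_congr_dualLattice {z z' : Fin d → ℤ} (hz : dualLattice N z = dualLattice N z') :
    e2 N γ α z = e2 N γ α z' :=
  tsum_congr fun h => if_congr (and_congr_right' (Set.ext_iff.1 hz h)) rfl rfl

lemma rprod_nonneg (hγ : ∀ j, 0 ≤ γ j) (α : ℝ) (h : Fin d → ℤ) : 0 ≤ rprod γ α h := by
  refine Finset.prod_nonneg fun j _ => ?_
  have := hγ (j.1 + 1)
  split_ifs <;> positivity

lemma rprod_rpow (hγ : ∀ j, 0 ≤ γ j) (α p : ℝ) (h : Fin d → ℤ) :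
    rprod γ α h ^ p = rprod (fun j => γ j ^ p) (α * p) h := by
  have hpos : ∀ j : Fin d, 0 ≤ if h j = 0 then 1 else γ (j.1 + 1) * (|h j| : ℝ) ^ (-α) := by
    intro j
    have := hγ (j.1 + 1)
    split_ifs <;> positivity
  unfold rprod
  rw [← Real.finsetProd_rpow _ _ fun j _ => hpos j]
  refine Finset.prod_congr rfl fun j _ => ?_
  split_ifs
  · exact Real.one_rpow p
  · rw [Real.mul_rpow (hγ _) (by positivity), ← Real.rpow_mul (abs_nonneg _), neg_mul]

lemma e2_eq_toReal_totalWeight (hγ : ∀ j, 0 ≤ γ j) (N : ℕ) (α : ℝ) (z : Fin d → ℤ) :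
    e2 N γ α z = (totalWeight γ α (dualLattice N z \ {0})).toReal := by
  classical
  rw [totalWeight, ENNReal.tsum_toReal_eq fun _ => ENNReal.ofReal_ne_top]
  simp only [ENNReal.toReal_ofReal (rprod_nonneg hγ α _)]
  rw [tsum_subtype (dualLattice N z \ {0}) (rprod γ α), e2]
  refine tsum_congr fun h => ?_
  rw [Set.indicator_apply]
  exact if_congr and_comm rfl rfl

lemma e2_nonneg (hγ : ∀ j, 0 ≤ γ j) (N : ℕ) (α : ℝ) (z : Fin d → ℤ) : 0 ≤ e2 N γ α z := by
  rw [e2_eq_toReal_totalWeight hγ]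
  exact ENNReal.toReal_nonneg

lemma e2_fin_zero (z : Fin 0 → ℤ) : e2 N γ α z = 0 :=
  (tsum_congr fun h => if_neg fun hh => hh.1 (Subsingleton.elim h 0)).trans tsum_zero

end DualLattice

section Jensen

lemma rpow_tsum_le_tsum_rpow {ι : Type*} (f : ι → ℝ≥0∞) {p : ℝ} (hp : 0 < p)
    (hp1 : p ≤ 1) : (∑' i, f i) ^ p ≤ ∑' i, f i ^ p := by
  rw [← ENNReal.le_rpow_inv_iff hp, ENNReal.tsum_eq_iSup_sum]
  refine iSup_le fun s => ?_
  rw [ENNReal.le_rpow_inv_iff hp]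
  calc (∑ i ∈ s, f i) ^ p ≤ ∑ i ∈ s, f i ^ p :=
        Finset.le_sum_of_subadditive (· ^ p) (ENNReal.zero_rpow_of_pos hp).le
          (fun a b => ENNReal.rpow_add_le_add_rpow a b hp.le hp1) s f
    _ ≤ ∑' i, f i ^ p := ENNReal.sum_le_tsum s

variable {γ : ℕ → ℝ} {α p : ℝ} {d : ℕ}

lemma totalWeight_rpow_le (hγ : ∀ j, 0 ≤ γ j) (hp : 0 < p) (hp1 : p ≤ 1)
    (A : Set (Fin d → ℤ)) :
    totalWeight γ α A ^ p ≤ totalWeight (fun j => γ j ^ p) (α * p) A := by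
  refine (rpow_tsum_le_tsum_rpow _ hp hp1).trans_eq (tsum_congr fun h => ?_)
  rw [ENNReal.ofReal_rpow_of_nonneg (rprod_nonneg hγ _ _) hp.le, rprod_rpow hγ]

end Jensen

section TotalWeight

variable {d : ℕ} {γ : ℕ → ℝ} {x : ℝ}

/-- The weight `|k|^{-x}` of a one-dimensional frequency. For `x ≠ 0` it vanishes at `k = 0`,
since `0 ^ (-x) = 0` in `ℝ`, so sums over `ℤ` are sums over nonzero frequencies. -/
noncomputable def freqWeight (x : ℝ) (k : ℤ) : ℝ≥0∞ :=
  ENNReal.ofReal (|(k : ℝ)| ^ (-x))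

lemma freqWeight_zero (hx : x ≠ 0) : freqWeight x 0 = 0 := by
  simp [freqWeight, Real.zero_rpow (neg_ne_zero.2 hx)]

lemma freqWeight_natCast_mul (x : ℝ) (g : ℕ) (k : ℤ) :
    freqWeight x (g * k) = ENNReal.ofReal ((g : ℝ) ^ (-x)) * freqWeight x k := by
  rw [freqWeight, freqWeight, ← ENNReal.ofReal_mul (by positivity)]
  push_cast
  rw [abs_mul, Nat.abs_cast, Real.mul_rpow (by positivity) (abs_nonneg _)]

lemma zeta_nonneg (x : ℝ) : 0 ≤ zeta x := tsum_nonneg fun n => by positivity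

lemma tsum_freqWeight (hx : 1 < x) : ∑' k, freqWeight x k = ENNReal.ofReal (2 * zeta x) := by
  have hsum : Summable fun n : ℕ => ((n : ℝ) + 1) ^ (-x) := by
    simpa using (summable_nat_add_iff (f := fun n : ℕ => (n : ℝ) ^ (-x)) 1).2
      (Real.summable_nat_rpow.2 (by linarith))
  have hpos (n : ℕ) : freqWeight x (n + 1) = ENNReal.ofReal (((n : ℝ) + 1) ^ (-x)) := by
    simp [freqWeight, abs_of_pos (show (0 : ℝ) < n + 1 by positivity)]
  have hneg (n : ℕ) : freqWeight x (-(n + 1)) = ENNReal.ofReal (((n : ℝ) + 1) ^ (-x)) := by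
    rw [← hpos n]
    simp only [freqWeight, Int.cast_neg, abs_neg]
  rw [tsum_of_add_one_of_neg_add_one ENNReal.summable ENNReal.summable]
  simp only [hpos, hneg, freqWeight_zero (by linarith : x ≠ 0), add_zero]
  rw [← ENNReal.ofReal_tsum_of_nonneg (fun n => by positivity) hsum, two_mul]
  exact (ENNReal.ofReal_add (zeta_nonneg x) (zeta_nonneg x)).symm

lemma tsum_fin_snoc {ι : Type*} (F : (Fin (d + 1) → ι) → ℝ≥0∞) :
    ∑' h, F h = ∑' (h : Fin d → ι) (k : ι), F (Fin.snoc h k) := by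
  rw [← (Fin.snocEquiv fun _ => ι).tsum_eq, ENNReal.tsum_prod', ENNReal.tsum_comm]
  rfl

lemma ofReal_rprod_snoc (hγ : ∀ j, 0 ≤ γ j) (hx : x ≠ 0) (h : Fin d → ℤ) (k : ℤ) :
    ENNReal.ofReal (rprod γ x (Fin.snoc h k : Fin (d + 1) → ℤ)) =
      ENNReal.ofReal (rprod γ x h) *
        ((if k = 0 then 1 else 0) + ENNReal.ofReal (γ (d + 1)) * freqWeight x k) := by
  have hsnoc : rprod γ x (Fin.snoc h k : Fin (d + 1) → ℤ) =
      rprod γ x h * if k = 0 then 1 else γ (d + 1) * |(k : ℝ)| ^ (-x) := by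
    simp [rprod, Fin.prod_univ_castSucc]
  rw [hsnoc, ENNReal.ofReal_mul (rprod_nonneg hγ x h)]
  split_ifs with hk
  · simp [hk, freqWeight_zero hx]
  · rw [ENNReal.ofReal_mul (hγ _), zero_add, freqWeight]

lemma totalWeight_univ (hγ : ∀ j, 0 ≤ γ j) (hx : 1 < x) (d : ℕ) :
    totalWeight γ x (Set.univ : Set (Fin d → ℤ)) =
      ENNReal.ofReal (∏ j ∈ Finset.Icc 1 d, (1 + γ j * (2 * zeta x))) := by
  rw [totalWeight, tsum_univ fun h => ENNReal.ofReal (rprod γ x h)]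
  have hterm (j : ℕ) : 0 ≤ γ j * (2 * zeta x) :=
    mul_nonneg (hγ j) (mul_nonneg zero_le_two (zeta_nonneg x))
  induction d with
  | zero => simp [rprod]
  | succ d ih =>
    rw [tsum_fin_snoc, Finset.prod_Icc_succ_top (by omega), ENNReal.ofReal_mul
      (Finset.prod_nonneg fun j _ => add_nonneg zero_le_one (hterm j)), ← ih,
      ← ENNReal.tsum_mul_right]
    refine tsum_congr fun h => ?_
    simp only [ofReal_rprod_snoc hγ (by linarith : x ≠ 0) h]
    rw [ENNReal.tsum_mul_left, ENNReal.tsum_add, tsum_ite_eq, ENNReal.tsum_mul_left,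
      tsum_freqWeight hx, ← ENNReal.ofReal_mul (hγ _), ← ENNReal.ofReal_one,
      ← ENNReal.ofReal_add zero_le_one (hterm _)]

lemma totalWeight_ne_top (hγ : ∀ j, 0 ≤ γ j) (hx : 1 < x) (A : Set (Fin d → ℤ)) :
    totalWeight γ x A ≠ ∞ := by
  have hle : totalWeight γ x A ≤ totalWeight γ x Set.univ :=
    ENNReal.tsum_mono_subtype (fun h => ENNReal.ofReal (rprod γ x h)) A.subset_univ
  rw [totalWeight_univ hγ hx] at hle
  exact ne_top_of_le_ne_top ENNReal.ofReal_ne_top hle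

lemma dualLattice_snoc_sdiff_zero (N : ℕ) (z : Fin d → ℤ) (y : ℤ) :
    dualLattice N (Fin.snoc z y : Fin (d + 1) → ℤ) \ {0} =
      (fun h => (Fin.snoc h 0 : Fin (d + 1) → ℤ)) '' (dualLattice N z \ {0}) ∪ newDual N z y := by
  have hsnoc (h : Fin d → ℤ) (k : ℤ) :
      (Fin.snoc h k : Fin (d + 1) → ℤ) = 0 ↔ h = 0 ∧ k = 0 := by
    simp [funext_iff, Fin.forall_fin_succ']
  have hzero (h : Fin d → ℤ) : (Fin.snoc h 0 : Fin (d + 1) → ℤ) ∈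
      dualLattice N (Fin.snoc z y : Fin (d + 1) → ℤ) ↔ h ∈ dualLattice N z := by
    rw [snoc_mem_dualLattice, zero_mul, add_zero]
    rfl
  ext h
  obtain ⟨h, k, rfl⟩ : ∃ h' k, h = Fin.snoc h' k := ⟨_, _, (Fin.snoc_init_self h).symm⟩
  by_cases hk : k = 0
  · simp [newDual, hzero, hsnoc, Fin.snoc_inj, hk]
  · simp [newDual, hsnoc, Fin.snoc_inj, hk, Ne.symm hk]

lemma totalWeight_snoc (γ : ℕ → ℝ) (x : ℝ) (N : ℕ) (z : Fin d → ℤ) (y : ℤ) :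
    totalWeight γ x (dualLattice N (Fin.snoc z y : Fin (d + 1) → ℤ) \ {0}) =
      totalWeight γ x (dualLattice N z \ {0}) + totalWeight γ x (newDual N z y) := by
  have hdisj : Disjoint
      ((fun h => (Fin.snoc h 0 : Fin (d + 1) → ℤ)) '' (dualLattice N z \ {0})) (newDual N z y) := by
    rw [Set.disjoint_left]
    rintro _ ⟨h, -, rfl⟩ hnew
    exact hnew.2 (by simp)
  have hinj : Function.Injective fun h => (Fin.snoc h 0 : Fin (d + 1) → ℤ) :=
    fun h h' heq => (Fin.snoc_inj.1 heq).1
  have hprod (h : Fin d → ℤ) : rprod γ x (Fin.snoc h 0 : Fin (d + 1) → ℤ) = rprod γ x h := by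
    simp [rprod, Fin.prod_univ_castSucc]
  rw [dualLattice_snoc_sdiff_zero, totalWeight, ENNReal.summable.tsum_union_disjoint
    (f := fun h => ENNReal.ofReal (rprod γ x h)) hdisj ENNReal.summable,
    tsum_image (fun h => ENNReal.ofReal (rprod γ x h)) hinj.injOn]
  simp only [hprod, totalWeight]

lemma e2_snoc (hγ : ∀ j, 0 ≤ γ j) (hx : 1 < x) (N : ℕ) (z : Fin d → ℤ) (y : ℤ) :
    e2 N γ x (Fin.snoc z y : Fin (d + 1) → ℤ) = e2 N γ x z + errorIncrement N γ x z y := by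
  rw [e2_eq_toReal_totalWeight hγ, e2_eq_toReal_totalWeight hγ, errorIncrement,
    totalWeight_snoc, ENNReal.toReal_add (totalWeight_ne_top hγ hx _)
    (totalWeight_ne_top hγ hx _)]

lemma errorIncrement_rpow_le {α p : ℝ} (hγ : ∀ j, 0 ≤ γ j) (hp : 0 < p) (hp1 : p ≤ 1)
    (hαp : 1 < α * p) (N : ℕ) (z : Fin d → ℤ) (y : ℤ) :
    errorIncrement N γ α z y ^ p ≤ errorIncrement N (fun j => γ j ^ p) (α * p) z y := by
  rw [errorIncrement, ENNReal.toReal_rpow]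
  exact ENNReal.toReal_mono
    (totalWeight_ne_top (fun j => Real.rpow_nonneg (hγ j) p) hαp _)
    (totalWeight_rpow_le hγ hp hp1 _)

end TotalWeight

section Counting

lemma gcd_eq_gcd_of_dvd_add_mul {M c k z : ℤ} (hz : IsCoprime z M) (hdvd : M ∣ c + k * z) :
    Int.gcd c M = Int.gcd k M := by
  calc Int.gcd c M = Int.gcd (c + k * z - k * z) M := by rw [add_sub_cancel_right]
    _ = Int.gcd (k * z) M := Int.gcd_sub_left_left_of_dvd _ hdvd
    _ = Int.gcd k M := Int.gcd_mul_left_left_of_gcd_eq_one (Int.isCoprime_iff_gcd_eq_one.1 hz)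

lemma card_range_filter_modEq_div {M g : ℕ} (hM : 0 < M) (hg : g ∣ M) (v : ℕ) :
    ((Finset.range M).filter fun z => z ≡ v [MOD M / g]).card = g := by
  have hq : 0 < M / g := Nat.div_pos (Nat.le_of_dvd hM hg) (Nat.pos_of_dvd_of_pos hg hM)
  rw [← Nat.count_eq_card_filter_range, Nat.count_modEq_card M hq,
    Nat.mod_eq_zero_of_dvd (Nat.div_dvd_of_dvd hg), if_neg (Nat.not_lt_zero _), add_zero,
    Nat.div_div_self hg hM.ne']

lemma card_filter_dvd_add_mul_le {M : ℕ} {S : Finset ℕ} (hlt : ∀ z ∈ S, z < M)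
    (hcop : ∀ z ∈ S, z.Coprime M) (c k : ℤ) :
    (S.filter fun z : ℕ => (M : ℤ) ∣ c + k * z).card ≤
      if (Int.gcd c M : ℤ) ∣ k then Int.gcd c M else 0 := by
  rcases (S.filter fun z : ℕ => (M : ℤ) ∣ c + k * z).eq_empty_or_nonempty with h | ⟨v, hv⟩
  · simp [h]
  obtain ⟨hvS, hv⟩ := Finset.mem_filter.1 hv
  have hM : 0 < M := (Nat.zero_le v).trans_lt (hlt v hvS)
  have hgcd : Int.gcd c M = Int.gcd k M :=
    gcd_eq_gcd_of_dvd_add_mul (Nat.isCoprime_iff_coprime.2 (hcop v hvS)) hv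
  have hgM : Int.gcd k M ∣ M := Int.natCast_dvd_natCast.1 (Int.gcd_dvd_right k M)
  rw [hgcd, if_pos (Int.gcd_dvd_left k M), ← card_range_filter_modEq_div hM hgM v]
  refine Finset.card_le_card fun z hz => ?_
  obtain ⟨hzS, hz⟩ := Finset.mem_filter.1 hz
  have hmul : k * z ≡ k * v [ZMOD M] :=
    Int.ModEq.add_left_cancel' c ((Int.modEq_zero_iff_dvd.2 hz).trans
      (Int.modEq_zero_iff_dvd.2 hv).symm)
  have hmod := hmul.cancel_left_div_gcd (by exact_mod_cast hM)
  rw [Int.gcd_comm, ← Int.natCast_div, Int.natCast_modEq_iff] at hmod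
  exact Finset.mem_filter.2 ⟨Finset.mem_range.2 (hlt z hzS), hmod⟩

lemma tsum_multiples_mul_freqWeight_le {x : ℝ} (hx : 1 ≤ x) {g : ℕ} (hg : 0 < g) :
    ∑' k : ℤ, (if (g : ℤ) ∣ k then (g : ℝ≥0∞) * freqWeight x k else 0) ≤
      ∑' k, freqWeight x k := by
  have hinj : Function.Injective fun j : ℤ => (g : ℤ) * j :=
    mul_right_injective₀ (by exact_mod_cast hg.ne')
  have hsupp : (Function.support fun k : ℤ =>
      if (g : ℤ) ∣ k then (g : ℝ≥0∞) * freqWeight x k else 0) ⊆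
        Set.range fun j : ℤ => (g : ℤ) * j := by
    intro k hk
    obtain ⟨j, rfl⟩ : (g : ℤ) ∣ k := by
      by_contra hndvd
      exact hk (if_neg hndvd)
    exact ⟨j, rfl⟩
  have hle : (g : ℝ) * (g : ℝ) ^ (-x) ≤ 1 := by
    have hg0 : (0 : ℝ) < g := by exact_mod_cast hg
    calc (g : ℝ) * (g : ℝ) ^ (-x) = (g : ℝ) ^ (1 + -x) := by
          rw [Real.rpow_add hg0, Real.rpow_one]
      _ ≤ 1 := Real.rpow_le_one_of_one_le_of_nonpos (by exact_mod_cast hg) (by linarith)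
  rw [← hinj.tsum_eq hsupp]
  refine ENNReal.tsum_le_tsum fun j => ?_
  rw [if_pos (dvd_mul_right _ _), freqWeight_natCast_mul, ← mul_assoc, ← ENNReal.ofReal_natCast,
    ← ENNReal.ofReal_mul (by positivity)]
  exact mul_le_of_le_one_left' (ENNReal.ofReal_le_one.2 hle)

lemma tsum_card_filter_mul_freqWeight_le {x : ℝ} (hx : 1 < x) {M : ℕ} {S : Finset ℕ}
    (hM : 0 < M) (hlt : ∀ z ∈ S, z < M) (hcop : ∀ z ∈ S, z.Coprime M) (c : ℤ) :
    ∑' k : ℤ, ((S.filter fun z : ℕ => (M : ℤ) ∣ c + k * z).card : ℝ≥0∞) * freqWeight x k ≤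
      ∑' k, freqWeight x k := by
  have hg : 0 < Int.gcd c M := Int.gcd_pos_of_ne_zero_right c (by exact_mod_cast hM.ne')
  refine le_trans (ENNReal.tsum_le_tsum fun k => ?_) (tsum_multiples_mul_freqWeight_le hx.le hg)
  have hcard : ((S.filter fun z : ℕ => (M : ℤ) ∣ c + k * z).card : ℝ≥0∞) ≤
      ((if (Int.gcd c M : ℤ) ∣ k then Int.gcd c M else 0 : ℕ) : ℝ≥0∞) := by
    exact_mod_cast card_filter_dvd_add_mul_le hlt hcop c k
  refine (mul_le_mul_left hcard _).trans_eq ?_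
  split_ifs <;> simp

end Counting

section ReducedSearchSpace

variable {b m w : ℕ}

lemma coprime_of_mem_Zred {z : ℕ} (hz : z ∈ Zred b m w) : z.Coprime (b ^ (m - w)) := by
  unfold Zred at hz
  split_ifs at hz with hw
  · exact Nat.Coprime.coprime_dvd_right (pow_dvd_pow b (m.sub_le w)) (Finset.mem_filter.1 hz).2
  · simp [Nat.sub_eq_zero_of_le (not_lt.1 hw)]

lemma lt_of_mem_Zred (hw : w < m) {z : ℕ} (hz : z ∈ Zred b m w) : z < b ^ (m - w) := by
  rw [Zred, if_pos hw] at hz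
  exact (Finset.mem_Ico.1 (Finset.mem_filter.1 hz).1).2

lemma Zred_eq_singleton (hw : m ≤ w) : Zred b m w = {1} := if_neg hw.not_gt

lemma card_Zred (hne : (Zred b m w).Nonempty) : (Zred b m w).card = (b ^ (m - w)).totient := by
  rcases lt_or_ge w m with hw | hw
  · obtain ⟨y, hy⟩ := hne
    have hb : 1 < b ^ (m - w) := by
      rw [Zred, if_pos hw, Finset.mem_filter, Finset.mem_Ico] at hy
      omega
    rw [Nat.totient_eq_card_coprime, Zred, if_pos hw]
    congr 1
    ext z
    have hcop : Nat.gcd z (b ^ m) = 1 ↔ (b ^ (m - w)).Coprime z := by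
      rw [← Nat.coprime_iff_gcd_eq_one, Nat.coprime_pow_right_iff (by omega),
        Nat.coprime_comm, Nat.coprime_pow_left_iff (by omega)]
    have hpos (hz : (b ^ (m - w)).Coprime z) : 1 ≤ z :=
      Nat.pos_of_ne_zero fun h0 => hb.ne' (by simpa [h0] using hz)
    simp only [Finset.mem_filter, Finset.mem_Ico, Finset.mem_range, hcop]
    tauto
  · simp [Zred_eq_singleton hw, Nat.sub_eq_zero_of_le hw]

lemma tsum_card_filter_reduced_mul_freqWeight_le {x : ℝ} (hx : 1 < x) {S : Finset ℕ}
    (hS : S ⊆ Zred b m w) (c : ℤ) :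
    ∑' k : ℤ, ((S.filter fun y : ℕ => ((b ^ m : ℕ) : ℤ) ∣ c + k * ((b : ℤ) ^ w * y)).card : ℝ≥0∞) *
        freqWeight x k ≤ ∑' k, freqWeight x k := by
  rcases S.eq_empty_or_nonempty with rfl | ⟨y₀, hy₀⟩
  · simp
  rcases lt_or_ge w m with hw | hw
  · have hM : 0 < b ^ (m - w) := (Nat.zero_le y₀).trans_lt (lt_of_mem_Zred hw (hS hy₀))
    have hb : b ≠ 0 := ne_zero_pow (Nat.sub_ne_zero_of_lt hw) hM.ne'
    have hbw : (b : ℤ) ^ w ≠ 0 := pow_ne_zero w (Nat.cast_ne_zero.2 hb)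
    have hpow : ((b ^ m : ℕ) : ℤ) = (b : ℤ) ^ w * ((b ^ (m - w) : ℕ) : ℤ) := by
      push_cast
      rw [← pow_add, Nat.add_sub_of_le hw.le]
    by_cases hc : (b : ℤ) ^ w ∣ c
    · obtain ⟨c, rfl⟩ := hc
      simp only [mul_left_comm _ ((b : ℤ) ^ w), ← mul_add, hpow, mul_dvd_mul_iff_left hbw]
      exact tsum_card_filter_mul_freqWeight_le hx hM (fun y hy => lt_of_mem_Zred hw (hS hy))
        (fun y hy => coprime_of_mem_Zred (hS hy)) c
    · have hndvd (k : ℤ) (y : ℕ) : ¬ ((b ^ m : ℕ) : ℤ) ∣ c + k * ((b : ℤ) ^ w * y) := fun hdvd =>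
        hc ((dvd_add_left (Dvd.intro _ (mul_left_comm _ k _))).1
          ((Dvd.intro _ hpow.symm).trans hdvd))
      simp only [hndvd, Finset.filter_false, Finset.card_empty, Nat.cast_zero, zero_mul, tsum_zero,
        zero_le]
  · rw [Zred_eq_singleton hw] at hS
    refine ENNReal.tsum_le_tsum fun k => mul_le_of_le_one_left' ?_
    exact_mod_cast (Finset.card_filter_le _ _).trans (Finset.card_le_card hS)

end ReducedSearchSpace

section GreedyStep

variable {b m w d : ℕ} {γ : ℕ → ℝ} {S : Finset ℕ}

lemma totalWeight_newDual {x : ℝ} (hγ : ∀ j, 0 ≤ γ j) (hx : x ≠ 0) (N : ℕ) (z : Fin d → ℤ)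
    (y : ℤ) :
    totalWeight γ x (newDual N z y) = ∑' (h : Fin d → ℤ) (k : ℤ),
      if (N : ℤ) ∣ ∑ j, h j * z j + k * y then
        ENNReal.ofReal (rprod γ x h) * (ENNReal.ofReal (γ (d + 1)) * freqWeight x k) else 0 := by
  classical
  rw [totalWeight, tsum_subtype (newDual N z y) fun h => ENNReal.ofReal (rprod γ x h),
    tsum_fin_snoc]
  refine tsum_congr fun h => tsum_congr fun k => ?_
  by_cases hk : k = 0
  · simp [newDual, hk, freqWeight_zero hx]
  · simp [newDual, Set.indicator_apply, snoc_mem_dualLattice, ofReal_rprod_snoc hγ hx, hk]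

lemma sum_totalWeight_newDual_le {x : ℝ} (hγ : ∀ j, 0 ≤ γ j) (hx : 1 < x)
    (hS : S ⊆ Zred b m w) (z : Fin d → ℤ) :
    ∑ y ∈ S, totalWeight γ x (newDual (b ^ m) z ((b : ℤ) ^ w * y)) ≤
      totalWeight γ x (Set.univ : Set (Fin d → ℤ)) *
        (ENNReal.ofReal (γ (d + 1)) * ∑' k, freqWeight x k) := by
  simp only [totalWeight_newDual hγ (by linarith : x ≠ 0)]
  rw [totalWeight, tsum_univ fun h => ENNReal.ofReal (rprod γ x h), ← ENNReal.tsum_mul_right,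
    ← Summable.tsum_finsetSum fun _ _ => ENNReal.summable]
  refine ENNReal.tsum_le_tsum fun h => ?_
  rw [← Summable.tsum_finsetSum fun _ _ => ENNReal.summable]
  simp only [← Finset.sum_filter, Finset.sum_const, nsmul_eq_mul, mul_left_comm (Nat.cast _),
    ENNReal.tsum_mul_left]
  exact mul_le_mul_right (mul_le_mul_right
    (tsum_card_filter_reduced_mul_freqWeight_le hx hS _) _) _

lemma sum_errorIncrement_le {x : ℝ} (hγ : ∀ j, 0 ≤ γ j) (hx : 1 < x) (hS : S ⊆ Zred b m w)
    (z : Fin d → ℤ) :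
    ∑ y ∈ S, errorIncrement (b ^ m) γ x z ((b : ℤ) ^ w * y) ≤
      (∏ j ∈ Finset.Icc 1 d, (1 + γ j * (2 * zeta x))) * (γ (d + 1) * (2 * zeta x)) := by
  have hζ := zeta_nonneg x
  have hprod : 0 ≤ ∏ j ∈ Finset.Icc 1 d, (1 + γ j * (2 * zeta x)) :=
    Finset.prod_nonneg fun j _ => by
      have := hγ j
      positivity
  have hlast : 0 ≤ γ (d + 1) * (2 * zeta x) := mul_nonneg (hγ _) (by positivity)
  have hle := sum_totalWeight_newDual_le hγ hx hS z
  rw [totalWeight_univ hγ hx, tsum_freqWeight hx, ← ENNReal.ofReal_mul (hγ _),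
    ← ENNReal.ofReal_mul hprod] at hle
  simp only [errorIncrement]
  rw [← ENNReal.toReal_sum fun y _ => totalWeight_ne_top hγ hx _]
  exact ENNReal.toReal_le_of_le_ofReal (mul_nonneg hprod hlast) hle

lemma e2_snoc_rpow_le {α p : ℝ} (hγ : ∀ j, 0 ≤ γ j) (hp : 0 < p) (hp1 : p ≤ 1)
    (hαp : 1 < α * p) (hS : S ⊆ Zred b m w) (hne : S.Nonempty) {z : Fin d → ℤ} {y : ℤ}
    (hmin : ∀ y' ∈ S, e2 (b ^ m) γ α (Fin.snoc z y : Fin (d + 1) → ℤ) ≤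
      e2 (b ^ m) γ α (Fin.snoc z ((b : ℤ) ^ w * y') : Fin (d + 1) → ℤ)) :
    e2 (b ^ m) γ α (Fin.snoc z y : Fin (d + 1) → ℤ) ^ p ≤ e2 (b ^ m) γ α z ^ p +
      (∏ j ∈ Finset.Icc 1 d, (1 + γ j ^ p * (2 * zeta (α * p)))) *
        (γ (d + 1) ^ p * (2 * zeta (α * p))) / S.card := by
  have hα : 1 < α := by nlinarith
  have hγp (j : ℕ) : 0 ≤ γ j ^ p := Real.rpow_nonneg (hγ j) p
  have hinc (y : ℤ) : 0 ≤ errorIncrement (b ^ m) γ α z y := ENNReal.toReal_nonneg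
  simp only [e2_snoc hγ hα, add_le_add_iff_left] at hmin ⊢
  refine (Real.rpow_add_le_add_rpow (e2_nonneg hγ _ _ _) (hinc y) hp.le hp1).trans
    (add_le_add_right ?_ _)
  rw [le_div_iff₀' (by exact_mod_cast hne.card_pos), ← nsmul_eq_mul, ← Finset.sum_const]
  calc ∑ _y' ∈ S, errorIncrement (b ^ m) γ α z y ^ p
      ≤ ∑ y' ∈ S, errorIncrement (b ^ m) (fun j => γ j ^ p) (α * p) z ((b : ℤ) ^ w * y') :=
        Finset.sum_le_sum fun y' hy' => (Real.rpow_le_rpow (hinc y) (hmin y' hy') hp.le).trans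
          (errorIncrement_rpow_le hγ hp hp1 hαp _ _ _)
    _ ≤ _ := sum_errorIncrement_le hγp hαp hS z

end GreedyStep

section Bound

variable {b m : ℕ} {γ : ℕ → ℝ} {w : ℕ → ℕ} {E : ℕ → Finset ℕ} {lam c : ℝ}

/-- The contribution of the coordinate set `u` to the error bound, with `c` in the place of the
paper's constant `4ζ(αλ)`. -/
noncomputable def boundTerm (b m : ℕ) (γ : ℕ → ℝ) (w : ℕ → ℕ) (E : ℕ → Finset ℕ) (lam c : ℝ)
    (u : Finset ℕ) : ℝ :=
  (∏ j ∈ u, γ j) ^ lam * c ^ u.card / (Nat.totient (b ^ (m - u.sup w)) : ℝ) *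
    ∏ j ∈ u, ((Zred b m (w j)).card : ℝ) / ((Zred b m (w j)).card - ((E j).card : ℝ))

lemma cast_card_sdiff {A B : Finset ℕ} (h : B ⊆ A) : ((A \ B).card : ℝ) = A.card - B.card := by
  rw [Finset.card_sdiff_of_subset h, Nat.cast_sub (Finset.card_le_card h)]

lemma one_le_card_div_card_sub {A B : Finset ℕ} (h : B ⊂ A) :
    1 ≤ (A.card : ℝ) / (A.card - B.card) := by
  have hlt : (B.card : ℝ) < A.card := by exact_mod_cast Finset.card_lt_card h
  rw [one_le_div (sub_pos.2 hlt)]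
  exact sub_le_self _ (Nat.cast_nonneg _)

lemma one_le_prod_card_div (hE : ∀ j, E j ⊂ Zred b m (w j)) (u : Finset ℕ) :
    1 ≤ ∏ j ∈ u, ((Zred b m (w j)).card : ℝ) / ((Zred b m (w j)).card - ((E j).card : ℝ)) :=
  Finset.prod_induction _ (1 ≤ ·) (fun _ _ => one_le_mul_of_one_le_of_one_le) le_rfl
    fun j _ => one_le_card_div_card_sub (hE j)

lemma boundTerm_nonneg (hγ : ∀ j, 0 ≤ γ j) (hE : ∀ j, E j ⊂ Zred b m (w j)) (hc : 0 ≤ c)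
    (u : Finset ℕ) : 0 ≤ boundTerm b m γ w E lam c u := by
  have hγu := Real.rpow_nonneg (Finset.prod_nonneg fun j (_ : j ∈ u) => hγ j) lam
  have hratio := zero_le_one.trans (one_le_prod_card_div hE u)
  unfold boundTerm
  positivity

lemma boundTerm_le_boundTerm {c' : ℝ} (hγ : ∀ j, 0 ≤ γ j) (hE : ∀ j, E j ⊂ Zred b m (w j))
    (hc : 0 ≤ c) (hcc' : c ≤ c') (u : Finset ℕ) :
    boundTerm b m γ w E lam c u ≤ boundTerm b m γ w E lam c' u := by
  have hγu := Real.rpow_nonneg (Finset.prod_nonneg fun j (_ : j ∈ u) => hγ j) lam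
  have hratio := zero_le_one.trans (one_le_prod_card_div hE u)
  unfold boundTerm
  gcongr

lemma totient_sup_pos_and_le_card_Zred {v : Finset ℕ} {i : ℕ} (hi : i ∈ v)
    (hne : (Zred b m (w i)).Nonempty) :
    0 < (b ^ (m - v.sup w)).totient ∧ (b ^ (m - v.sup w)).totient ≤ (Zred b m (w i)).card := by
  have hdvd : (b ^ (m - v.sup w)).totient ∣ (Zred b m (w i)).card := by
    rw [card_Zred hne]
    exact Nat.totient_dvd_of_dvd (pow_dvd_pow b (Nat.sub_le_sub_left (Finset.le_sup hi) m))
  exact ⟨Nat.pos_of_dvd_of_pos hdvd hne.card_pos, Nat.le_of_dvd hne.card_pos hdvd⟩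

lemma prod_mul_div_card_le_boundTerm_insert (hγ : ∀ j, 0 ≤ γ j)
    (hE : ∀ j, E j ⊂ Zred b m (w j)) (hc : 0 ≤ c) {i : ℕ} {v : Finset ℕ} (hi : i ∉ v) :
    (∏ j ∈ v, γ j ^ lam * c) * (γ i ^ lam * c) / (Zred b m (w i) \ E i).card ≤
      boundTerm b m γ w E lam c (insert i v) := by
  have hne : (Zred b m (w i)).Nonempty :=
    (Finset.sdiff_nonempty.2 (hE i).2).mono Finset.sdiff_subset
  obtain ⟨hpos, hle⟩ := totient_sup_pos_and_le_card_Zred (Finset.mem_insert_self i v) hne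
  have hratio : 1 ≤ ((Zred b m (w i)).card : ℝ) / (b ^ (m - (insert i v).sup w)).totient := by
    rw [one_le_div (by exact_mod_cast hpos)]
    exact_mod_cast hle
  have hterm (j : ℕ) : 0 ≤ γ j ^ lam * c := mul_nonneg (Real.rpow_nonneg (hγ j) lam) hc
  have hnonneg : 0 ≤ (∏ j ∈ v, γ j ^ lam * c) * (γ i ^ lam * c) / (Zred b m (w i) \ E i).card :=
    div_nonneg (mul_nonneg (Finset.prod_nonneg fun j _ => hterm j) (hterm i)) (Nat.cast_nonneg _)
  refine (le_mul_of_one_le_right hnonneg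
    (one_le_mul_of_one_le_of_one_le hratio (one_le_prod_card_div hE v))).trans_eq ?_
  rw [boundTerm, Finset.prod_insert hi, Finset.prod_insert hi, Finset.card_insert_of_notMem hi,
    Real.mul_rpow (hγ i) (Finset.prod_nonneg fun j _ => hγ j),
    ← Real.finsetProd_rpow _ _ fun j _ => hγ j, Finset.prod_mul_distrib, Finset.prod_const,
    cast_card_sdiff (hE i).1]
  ring

lemma sum_boundTerm_rpow_le_sum_boundTerm_rpow {c' : ℝ} (hγ : ∀ j, 0 ≤ γ j)
    (hE : ∀ j, E j ⊂ Zred b m (w j)) (hlam : 0 ≤ lam) (hc : 0 ≤ c) (hcc' : c ≤ c')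
    (A : Finset (Finset ℕ)) :
    (∑ u ∈ A, boundTerm b m γ w E lam c u) ^ (1 / lam) ≤
      (∑ u ∈ A, boundTerm b m γ w E lam c' u) ^ (1 / lam) :=
  Real.rpow_le_rpow (Finset.sum_nonneg fun u _ => boundTerm_nonneg hγ hE hc u)
    (Finset.sum_le_sum fun u _ => boundTerm_le_boundTerm hγ hE hc hcc' u)
    (one_div_nonneg.2 hlam)

lemma prod_one_add_mul_div_card_le_sum_boundTerm (hγ : ∀ j, 0 ≤ γ j)
    (hE : ∀ j, E j ⊂ Zred b m (w j)) (hc : 0 ≤ c) {i : ℕ} {s : Finset ℕ} (hi : i ∉ s) :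
    (∏ j ∈ s, (1 + γ j ^ lam * c)) * (γ i ^ lam * c) / (Zred b m (w i) \ E i).card ≤
      ∑ v ∈ s.powerset, boundTerm b m γ w E lam c (insert i v) := by
  rw [Finset.prod_one_add, Finset.sum_mul, Finset.sum_div]
  exact Finset.sum_le_sum fun v hv => prod_mul_div_card_le_boundTerm_insert hγ hE hc
    fun hiv => hi (Finset.mem_powerset.1 hv hiv)

end Bound

section Greedy

variable {b m d : ℕ} {γ : ℕ → ℝ} {α : ℝ} {w : ℕ → ℕ} {z : ℕ → ℤ}

/-- The vector `(z₁,…,z_d)` of the first `d` components of a sequence indexed from `1`. -/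
def firstComponents (z : ℕ → ℤ) (d : ℕ) : Fin d → ℤ := fun j => z (j.1 + 1)

/-- Each of the components `z₁,…,z_s` does at least as well, given the preceding ones, as every
candidate `b^{w_j} y` with `y ∈ S_j`. The component need not itself be a candidate, so that
`z₁ = 1` and the components set to `0` are covered as well. -/
def IsGreedy (N : ℕ) (γ : ℕ → ℝ) (α : ℝ) (b : ℕ) (w : ℕ → ℕ) (S : ℕ → Finset ℕ) (s : ℕ)
    (z : ℕ → ℤ) : Prop :=
  ∀ d < s, ∀ y ∈ S (d + 1), e2 N γ α (firstComponents z (d + 1)) ≤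
    e2 N γ α (Fin.snoc (firstComponents z d) ((b : ℤ) ^ w (d + 1) * y) : Fin (d + 1) → ℤ)

lemma firstComponents_succ (z : ℕ → ℤ) (d : ℕ) :
    firstComponents z (d + 1) = Fin.snoc (firstComponents z d) (z (d + 1)) := by
  ext i
  refine Fin.lastCases ?_ (fun i => ?_) i <;> simp [firstComponents]

lemma e2_firstComponents_one_eq {N : ℕ} {y : ℤ} (hy : IsCoprime (N : ℤ) y) (hz : z 1 = 1) :
    e2 N γ α (firstComponents z 1) =
      e2 N γ α (Fin.snoc (firstComponents z 0) y : Fin 1 → ℤ) := by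
  rw [← e2_congr_dualLattice (dualLattice_mul_left hy (firstComponents z 1))]
  congr 1
  ext j
  simp [firstComponents, Fin.snoc, hz]

lemma e2_snoc_congr {N : ℕ} {z : Fin d → ℤ} {y y' : ℤ} (hy : y ≡ y' [ZMOD N]) :
    e2 N γ α (Fin.snoc z y : Fin (d + 1) → ℤ) = e2 N γ α (Fin.snoc z y' : Fin (d + 1) → ℤ) := by
  refine e2_congr_dualLattice (dualLattice_congr fun j => ?_)
  refine Fin.lastCases ?_ (fun i => ?_) j <;> simp [hy, Int.ModEq.refl]

lemma IsGreedy.of_projectionCorrected {S : ℕ → Finset ℕ} {s t : ℕ} (hw1 : w 1 = 0)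
    (hS : ∀ j, S j ⊆ Zred b m (w j)) (hz1 : z 1 = 1) (hwt : ∀ j, t ≤ j → m ≤ w j)
    (hzero : ∀ j, t ≤ j → j ≤ s → z j = 0)
    (hsel : ∀ d, 1 ≤ d → d + 1 ≤ s → d + 1 < t → ∀ y ∈ S (d + 1),
      e2 (b ^ m) γ α (Fin.snoc (firstComponents z d) (z (d + 1)) : Fin (d + 1) → ℤ) ≤
        e2 (b ^ m) γ α
          (Fin.snoc (firstComponents z d) ((b : ℤ) ^ w (d + 1) * y) : Fin (d + 1) → ℤ)) :
    IsGreedy (b ^ m) γ α b w S s z := by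
  intro d hd y hy
  rcases Nat.eq_zero_or_pos d with rfl | hd0
  · have hcop := coprime_of_mem_Zred (hS 1 hy)
    rw [hw1, m.sub_zero] at hcop
    have hcand : (b : ℤ) ^ w (0 + 1) * y = y := by rw [zero_add, hw1, pow_zero, one_mul]
    rw [hcand]
    exact (e2_firstComponents_one_eq (Nat.isCoprime_iff_coprime.2 hcop.symm) hz1).le
  rw [firstComponents_succ]
  rcases lt_or_ge (d + 1) t with ht | ht
  · exact hsel d hd0 hd ht y hy
  · rw [hzero (d + 1) ht hd]
    refine (e2_snoc_congr (Int.modEq_zero_iff_dvd.2 ?_).symm).le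
    push_cast
    exact (pow_dvd_pow _ (hwt _ ht)).mul_right _

lemma IsGreedy.e2_rpow_le {E : ℕ → Finset ℕ} {lam : ℝ} {s : ℕ} (hγ : ∀ j, 0 ≤ γ j)
    (hE : ∀ j, E j ⊂ Zred b m (w j)) (hlam : 0 < lam) (hlam1 : lam ≤ 1) (hαlam : 1 < α * lam)
    (hz : IsGreedy (b ^ m) γ α b w (fun j => Zred b m (w j) \ E j) s z) (hd : d ≤ s) :
    e2 (b ^ m) γ α (firstComponents z d) ^ lam ≤
      ∑ u ∈ (Finset.Icc 1 d).powerset, boundTerm b m γ w E lam (2 * zeta (α * lam)) u := by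
  have hζ : 0 ≤ 2 * zeta (α * lam) := mul_nonneg zero_le_two (zeta_nonneg _)
  induction d with
  | zero =>
    rw [e2_fin_zero, Real.zero_rpow hlam.ne']
    exact Finset.sum_nonneg fun u _ => boundTerm_nonneg hγ hE hζ u
  | succ d ih =>
    have hnew : d + 1 ∉ Finset.Icc 1 d := by simp
    have hmin := hz d hd
    rw [firstComponents_succ] at hmin ⊢
    rw [← Finset.insert_Icc_right_eq_Icc_add_one (by omega), Finset.sum_powerset_insert hnew]
    exact (e2_snoc_rpow_le hγ hlam hlam1 hαlam Finset.sdiff_subset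
      (Finset.sdiff_nonempty.2 (hE _).2) hmin).trans (add_le_add (ih (Nat.le_of_succ_le hd))
        (prod_one_add_mul_div_card_le_sum_boundTerm hγ hE hζ hnew))

end Greedy

theorem reduced_projection_corrected_cbc_bound_general {α : ℝ} (hα : 1 < α) {b m s : ℕ}
    {γ : ℕ → ℝ} (hγ : ∀ j, 0 ≤ γ j) {w : ℕ → ℕ} {E : ℕ → Finset ℕ}
    (hE : ∀ j, E j ⊂ Zred b m (w j)) {z : ℕ → ℤ}
    (hz : IsGreedy (b ^ m) γ α b w (fun j => Zred b m (w j) \ E j) s z)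
    {d : ℕ} (hd : d ≤ s) {lam : ℝ} (hlam : 1 / α < lam) (hlam1 : lam ≤ 1) :
    e2 (b ^ m) γ α (firstComponents z d) ≤
      (∑ u ∈ (Finset.Icc 1 d).powerset,
        boundTerm b m γ w E lam (2 * zeta (α * lam)) u) ^ (1 / lam) := by
  have hα0 : 0 < α := zero_lt_one.trans hα
  have hlam0 : 0 < lam := (one_div_pos.2 hα0).trans hlam
  have hζ : 0 ≤ 2 * zeta (α * lam) := mul_nonneg zero_le_two (zeta_nonneg _)
  rw [one_div, Real.le_rpow_inv_iff_of_pos (e2_nonneg hγ _ _ _)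
    (Finset.sum_nonneg fun u _ => boundTerm_nonneg hγ hE hζ u) hlam0]
  exact hz.e2_rpow_le hγ hE hlam0 hlam1 ((div_lt_iff₀' hα0).1 hlam) hd

/-- Main theorem (Theorem 2): the worst-case error of the generating vector produced by the
reduced projection-corrected CBC algorithm satisfies, for all `1 ≤ d ≤ s` and
`λ ∈ (1/α, 1]`,
`e²(z̃₁,…,z̃_d) ≤ (Σ_{u ⊆ [d]} γ_u^λ (4ζ(αλ))^{|u|} / φ(b^{max{0,m-max_{j∈u}w_j}})
  ∏_{j∈u} |Z_{N,w_j}|/(|Z_{N,w_j}|-|E_j|))^{1/λ}`. -/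
theorem reduced_projection_corrected_cbc_bound
    (α : ℝ) (hα : 1 < α) (b : ℕ) (hb : b.Prime) (m : ℕ) (hm : 1 ≤ m)
    (N : ℕ) (hN : N = b ^ m) (s : ℕ) (hs : 1 ≤ s)
    (γ : ℕ → ℝ) (hγ : ∀ j, 0 < γ j)
    (w : ℕ → ℕ) (hw1 : w 1 = 0) (hwmono : ∀ i j, i ≤ j → w i ≤ w j)
    (E : ℕ → Finset ℕ) (hE : ∀ j, E j ⊂ Zred b m (w j))
    (t₂ : ℕ) (ht₂ : m ≤ w t₂) (ht₂min : ∀ j < t₂, w j < m)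
    (zt : ℕ → ℤ) (hz1 : zt 1 = 1)
    -- projection-corrected selection of components `2,…,min{t₂-1,s}`:
    (hsel : ∀ d, 1 ≤ d → d + 1 ≤ s → d + 1 < t₂ →
      ∃ z ∈ Zred b m (w (d + 1)) \ E (d + 1),
        zt (d + 1) = (b : ℤ) ^ (w (d + 1)) * (z : ℤ) ∧
        ∀ z' ∈ Zred b m (w (d + 1)) \ E (d + 1),
          e2 N γ α (Fin.snoc (fun j : Fin d => zt (j.1 + 1)) (zt (d + 1))) ≤
            e2 N γ α (Fin.snoc (fun j : Fin d => zt (j.1 + 1))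
              ((b : ℤ) ^ (w (d + 1)) * (z' : ℤ))))
    -- components with index `≥ t₂` are set to `0`:
    (hzero : ∀ j, t₂ ≤ j → j ≤ s → zt j = 0) :
    ∀ d, 1 ≤ d → d ≤ s → ∀ lam : ℝ, 1 / α < lam → lam ≤ 1 →
      e2 N γ α (fun j : Fin d => zt (j.1 + 1)) ≤
        (∑ u ∈ (Finset.Icc 1 d).powerset,
            (∏ j ∈ u, γ j) ^ lam * (4 * zeta (α * lam)) ^ u.card /
                (Nat.totient (b ^ (m - u.sup w)) : ℝ) *
              ∏ j ∈ u, ((Zred b m (w j)).card : ℝ) /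
                ((Zred b m (w j)).card - ((E j).card : ℝ))) ^ (1 / lam) := by
  subst hN
  intro d _ hds lam hlam hlam1
  have hlam0 : 0 < lam := (one_div_pos.2 (zero_lt_one.trans hα)).trans hlam
  have hγ' (j : ℕ) : 0 ≤ γ j := (hγ j).le
  have hζ := zeta_nonneg (α * lam)
  have hz : IsGreedy (b ^ m) γ α b w (fun j => Zred b m (w j) \ E j) s zt :=
    .of_projectionCorrected hw1 (fun _ => Finset.sdiff_subset) hz1
      (fun j hj => ht₂.trans (hwmono t₂ j hj)) hzero
      fun i hi his hit => (hsel i hi his hit).choose_spec.2.2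
  exact (reduced_projection_corrected_cbc_bound_general hα hγ' hE hz hds hlam hlam1).trans
    (sum_boundTerm_rpow_le_sum_boundTerm_rpow hγ' hE hlam0.le (by linarith) (by linarith) _)
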